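/- Let e : Stream' ℕ → Stream' ℕ be any function satisfying e xs = SCons (2 ^ head xs) ((tail xs) ⊗ (e xs)) for all streams xs, where ⊗ is the shuffle product (binomial convolution) and ⊕ is pointwise addition. Then stream exponentiation distributes over pointwise addition: e (xs ⊕ ys) = (e xs) ⊗ (e ys) for all streams xs, ys. -/

import Mathlib

open Stream'

/-- Pointwise addition of streams. -/
def sadd (xs ys : Stream' ℕ) : Stream' ℕ := fun n => xs.get n + ys.get n

/-- Shuffle product of streams (binomial convolution). -/
def sshuffle (xs ys : Stream' ℕ) : Stream' ℕ :=
  fun n => ∑ k ∈ Finset.range (n + 1), n.choose k * xs.get k * ys.get (n - k)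

infixl:65 " ⊕ " => sadd
infixl:70 " ⊗ " => sshuffle

/-!
On exponential generating functions, pointwise addition is addition, the shuffle product is
multiplication and the tail is differentiation. The hypothesis on `e` thus says that `e xs` solves
the linear differential equation `z.tail = xs.tail ⊗ z` with initial value `2 ^ xs.head`. By the
Leibniz rule `e xs ⊗ e ys` solves the equation of `xs ⊕ ys`, and such an equation has only one
solution with a given initial value.
-/

open PowerSeries

/-- The exponential generating function `∑ sₙ Xⁿ / n!` of a stream `s`, which turns the shuffle
product into multiplication. Coefficients are in `ℚ` so that factorials can be divided by. -/
noncomputable def egf (s : Stream' ℕ) : ℚ⟦X⟧ :=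
  PowerSeries.mk fun n => (s.get n : ℚ) / n.factorial

theorem coeff_egf (s : Stream' ℕ) (n : ℕ) : coeff n (egf s) = (s.get n : ℚ) / n.factorial :=
  coeff_mk n _

theorem egf_injective : Function.Injective egf := by
  intro s t h
  ext n
  have hcoeff := congrArg (coeff n) h
  have hfact : (n.factorial : ℚ) ≠ 0 := Nat.cast_ne_zero.mpr n.factorial_ne_zero
  rw [coeff_egf, coeff_egf, div_left_inj' hfact] at hcoeff
  exact_mod_cast hcoeff

theorem get_sadd (s t : Stream' ℕ) (n : ℕ) : (s ⊕ t).get n = s.get n + t.get n :=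
  rfl

theorem head_sadd (s t : Stream' ℕ) : (s ⊕ t).head = s.head + t.head :=
  rfl

theorem tail_sadd (s t : Stream' ℕ) : (s ⊕ t).tail = s.tail ⊕ t.tail :=
  rfl

theorem get_sshuffle (s t : Stream' ℕ) (n : ℕ) :
    (s ⊗ t).get n = ∑ k ∈ Finset.range (n + 1), n.choose k * s.get k * t.get (n - k) :=
  rfl

theorem head_sshuffle (s t : Stream' ℕ) : (s ⊗ t).head = s.head * t.head := by
  simp [head, get_sshuffle]

theorem egf_sadd (s t : Stream' ℕ) : egf (s ⊕ t) = egf s + egf t := by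
  ext n
  rw [map_add, coeff_egf, coeff_egf, coeff_egf, get_sadd, Nat.cast_add, add_div]

theorem egf_sshuffle (s t : Stream' ℕ) : egf (s ⊗ t) = egf s * egf t := by
  ext n
  rw [coeff_mul, Finset.Nat.sum_antidiagonal_eq_sum_range_succ_mk, coeff_egf, get_sshuffle,
    Nat.cast_sum, Finset.sum_div]
  refine Finset.sum_congr rfl fun k hk => ?_
  have hkn : k ≤ n := Finset.mem_range_succ_iff.mp hk
  rw [coeff_egf, coeff_egf, Nat.cast_mul, Nat.cast_mul, Nat.cast_choose ℚ hkn]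
  field_simp

theorem egf_tail (s : Stream' ℕ) : egf s.tail = derivative ℚ (egf s) := by
  ext n
  rw [coeff_derivative, coeff_egf, coeff_egf, get_tail, Nat.factorial_succ]
  push_cast
  field_simp

theorem tail_sshuffle (s t : Stream' ℕ) : (s ⊗ t).tail = s.tail ⊗ t ⊕ s ⊗ t.tail := by
  apply egf_injective
  simp only [egf_tail, egf_sshuffle, egf_sadd, Derivation.leibniz, smul_eq_mul]
  ring

theorem tail_sshuffle_eq_sadd_sshuffle {a b s t : Stream' ℕ}
    (hs : s.tail = a ⊗ s) (ht : t.tail = b ⊗ t) : (s ⊗ t).tail = (a ⊕ b) ⊗ (s ⊗ t) := by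
  rw [tail_sshuffle, hs, ht]
  apply egf_injective
  simp only [egf_sshuffle, egf_sadd]
  ring

theorem eq_of_tail_eq_sshuffle {a s t : Stream' ℕ} (hhead : s.head = t.head)
    (hs : s.tail = a ⊗ s) (ht : t.tail = a ⊗ t) : s = t := by
  ext n
  induction n using Nat.strong_induction_on with
  | _ n ih =>
    cases n with
    | zero => exact hhead
    | succ n =>
      rw [← get_tail, ← get_tail, hs, ht, get_sshuffle, get_sshuffle]
      refine Finset.sum_congr rfl fun k _ => ?_
      rw [ih (n - k) (by omega)]

theorem stmt_11_general (b : ℕ) (e : Stream' ℕ → Stream' ℕ)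
    (he : ∀ xs, e xs = Stream'.cons (b ^ xs.head) (xs.tail ⊗ e xs)) :
    ∀ xs ys, e (xs ⊕ ys) = (e xs) ⊗ (e ys) := by
  intro xs ys
  have head_e (zs : Stream' ℕ) : (e zs).head = b ^ zs.head := congrArg head (he zs)
  have tail_e (zs : Stream' ℕ) : (e zs).tail = zs.tail ⊗ e zs := congrArg tail (he zs)
  have hhead : (e (xs ⊕ ys)).head = (e xs ⊗ e ys).head := by
    rw [head_sshuffle, head_e, head_e, head_e, head_sadd, pow_add]
  have htail : (e xs ⊗ e ys).tail = (xs ⊕ ys).tail ⊗ (e xs ⊗ e ys) := by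
    rw [tail_sadd]
    exact tail_sshuffle_eq_sadd_sshuffle (tail_e xs) (tail_e ys)
  exact eq_of_tail_eq_sshuffle hhead (tail_e (xs ⊕ ys)) htail

theorem stmt_11 (e : Stream' ℕ → Stream' ℕ)
    (he : ∀ xs, e xs = Stream'.cons (2 ^ xs.head) (xs.tail ⊗ e xs)) :
    ∀ xs ys, e (xs ⊕ ys) = (e xs) ⊗ (e ys) :=
  stmt_11_general 2 e he
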